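/- arXiv:0805.3522 — 2 statements merged into one kernel-verified Lean document; each statement's English description precedes it below -/
import Mathlib

section
/- Let S and T be subsets of a finite abelian group G such that G is generated by S, S + T is aperiodic, 0 ∈ S ∩ T and |S + T| = |S| + |T| - 1. Then the set T^S - S is aperiodic and |T^S - S| = |T^S| + |S| - 1, where T^S = G \ (T + S) and T^S - S = {x - s : x ∈ T^S, s ∈ S}. -/
open scoped Pointwise

/-- A finite set is aperiodic if its period `{g : A + g = A}` is trivial. -/
def IsAperiodic {G : Type*} [AddCommGroup G] [DecidableEq G] (A : Finset G) : Prop :=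
  ∀ g : G, A + ({g} : Finset G) = A → g = 0

/-!
No element outside `T` can be added to `T` without enlarging `S + T`, since Kneser's theorem
`|S| + |T'| ≤ |S + T'| + 1` already holds with equality for `T' = T`. Hence `T` is exactly the set
of all `x` with `x + S ⊆ S + T`, which says that `T^S - S` is the complement of `T`.

Kneser's theorem is proved in the form `|A| + |B| ≤ |A + B| + |Stab(A + B)|`. Repeated Dyson
transforms give, for every `z ∈ A + B`, a set `C` with `z ∈ C ⊆ A + B` and
`|A| + |B| ≤ |C| + |Stab C|`, and this last inequality survives unions of such sets `C`.
-/

open AddAction Finset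

lemma stabilizer_compl_set {G α : Type*} [AddGroup G] [AddAction G α] (s : Set α) :
    stabilizer G sᶜ = stabilizer G s := by
  ext g
  rw [mem_stabilizer_iff, mem_stabilizer_iff, Set.vadd_set_compl, compl_inj_iff]

lemma card_le_card_of_forall_add_mem {G : Type*} [AddGroup G] {H : AddSubgroup G} {A : Finset G}
    {x : G} (h : ∀ g ∈ H, x + g ∈ A) : Nat.card H ≤ #A := by
  have hsub : x +ᵥ (H : Set G) ⊆ A := by
    rintro _ ⟨g, hg, rfl⟩
    exact h g hg
  calc Nat.card H = (x +ᵥ (H : Set G)).ncard := (Set.ncard_vadd_set x (H : Set G)).symm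
    _ ≤ (A : Set G).ncard := Set.ncard_le_ncard hsub
    _ = #A := Set.ncard_coe_finset A

lemma finite_stabilizer_of_nonempty {G : Type*} [AddGroup G] [DecidableEq G] {A : Finset G}
    (hA : A.Nonempty) : Finite (stabilizer G A) := by
  rw [← stabilizer_coe_finset]
  exact (stabilizer_finite hA A.finite_toSet).to_subtype

section Kneser

variable {G : Type*} [AddCommGroup G]

lemma ncard_add_ncard_le_ncard_add_add_card_inf {H K : AddSubgroup G} [Finite H] [Finite K]
    {P Q : Set G} (hP : P ⊆ H) (hQ : Q ⊆ K) (hP₀ : P.Nonempty) (hQ₀ : Q.Nonempty) :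
    P.ncard + Q.ncard ≤ (P + Q).ncard + Nat.card (H ⊓ K : AddSubgroup G) := by
  obtain ⟨p₀, hp₀⟩ := hP₀
  obtain ⟨q₀, hq₀⟩ := hQ₀
  have hPfin : P.Finite := (Set.toFinite (H : Set G)).subset hP
  have hQfin : Q.Finite := (Set.toFinite (K : Set G)).subset hQ
  have hunion : (q₀ +ᵥ P) ∪ (p₀ +ᵥ Q) ⊆ P + Q := by
    rintro _ (⟨p, hp, rfl⟩ | ⟨q, hq, rfl⟩)
    · exact ⟨p, hp, q₀, hq₀, add_comm p q₀⟩
    · exact Set.add_mem_add hp₀ hq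
  have hinter : (q₀ +ᵥ P) ∩ (p₀ +ᵥ Q) ⊆ (p₀ + q₀) +ᵥ ((H ⊓ K : AddSubgroup G) : Set G) := by
    rintro _ ⟨⟨p, hp, rfl⟩, q, hq, hpq : p₀ + q = q₀ + p⟩
    have hdiff : p - p₀ = q - q₀ := by
      rw [sub_eq_sub_iff_add_eq_add, add_comm p, add_comm q, hpq]
    refine ⟨p - p₀, ⟨H.sub_mem (hP hp) (hP hp₀), ?_⟩, ?_⟩
    · exact hdiff ▸ K.sub_mem (hQ hq) (hQ hq₀)
    · simp only [vadd_eq_add]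
      abel
  calc P.ncard + Q.ncard
      = ((q₀ +ᵥ P) ∪ (p₀ +ᵥ Q)).ncard + ((q₀ +ᵥ P) ∩ (p₀ +ᵥ Q)).ncard := by
        rw [Set.ncard_union_add_ncard_inter _ _ hPfin.vadd_set hQfin.vadd_set, Set.ncard_vadd_set,
          Set.ncard_vadd_set]
    _ ≤ (P + Q).ncard + ((p₀ + q₀) +ᵥ ((H ⊓ K : AddSubgroup G) : Set G)).ncard := by
        have hHKfin : ((H ⊓ K : AddSubgroup G) : Set G).Finite :=
          (Set.toFinite (H : Set G)).subset inf_le_left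
        exact add_le_add (Set.ncard_le_ncard hunion (hPfin.add hQfin))
          (Set.ncard_le_ncard hinter hHKfin.vadd_set)
    _ = (P + Q).ncard + Nat.card (H ⊓ K : AddSubgroup G) := by
        rw [Set.ncard_vadd_set]
        rfl

variable [DecidableEq G]

lemma add_mem_iff_of_mem_stabilizer {A : Finset G} {g x : G} (hg : g ∈ stabilizer G A) :
    x + g ∈ A ↔ x ∈ A := by
  rw [add_comm]
  exact mem_stabilizer_finset.1 hg x

section KneserLemma

variable {H K : AddSubgroup G} [Finite H] [Finite K] {C D : Finset G}

lemma ncard_add_ncard_le_card_sdiff_add_card_inf (hC : H ≤ stabilizer G C)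
    (hD : K ≤ stabilizer G D) {x : G} (hxD : ∃ p ∈ H, x + p ∈ D) (hxC : ∃ q ∈ K, x + q ∉ C) :
    {p | p ∈ H ∧ x + p ∈ D}.ncard + {q | q ∈ K ∧ x + q ∉ C}.ncard ≤
      #(D \ C) + Nat.card (H ⊓ K : AddSubgroup G) := by
  set P := {p | p ∈ H ∧ x + p ∈ D}
  set Q := {q | q ∈ K ∧ x + q ∉ C}
  have hsub : x +ᵥ (P + Q) ⊆ ((D \ C : Finset G) : Set G) := by
    rintro _ ⟨_, ⟨p, ⟨hpH, hpD⟩, q, ⟨hqK, hqC⟩, rfl⟩, rfl⟩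
    suffices x + (p + q) ∈ D ∧ x + (p + q) ∉ C from mem_sdiff.2 this
    constructor
    · rwa [← add_assoc, add_mem_iff_of_mem_stabilizer (hD hqK)]
    · rwa [add_comm p, ← add_assoc, add_mem_iff_of_mem_stabilizer (hC hpH)]
  calc P.ncard + Q.ncard
      ≤ (P + Q).ncard + Nat.card (H ⊓ K : AddSubgroup G) :=
        ncard_add_ncard_le_ncard_add_add_card_inf (fun _ hp => hp.1) (fun _ hq => hq.1) hxD hxC
    _ ≤ #(D \ C) + Nat.card (H ⊓ K : AddSubgroup G) := by
        rw [← Set.ncard_vadd_set x, ← Set.ncard_coe_finset]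
        exact Nat.add_le_add_right (Set.ncard_le_ncard hsub) _

/- `D` splits the coset `x + H` and `C` splits `x + K`. Modulo translation by `x`, the parts inside
`D` and outside `C` sum into `D \ C`, the parts outside `D` and inside `C` sum into `C \ D`. -/
lemma card_add_card_le_card_sdiff_add_card_sdiff (hC : H ≤ stabilizer G C)
    (hD : K ≤ stabilizer G D) {x : G} (hxD : x ∈ D) (hxC : x ∉ C) (hH : ∃ p ∈ H, x + p ∉ D)
    (hK : ∃ q ∈ K, x + q ∈ C) :
    Nat.card H + Nat.card K ≤ #(D \ C) + #(C \ D) + 2 * Nat.card (H ⊓ K : AddSubgroup G) := by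
  have hDC := ncard_add_ncard_le_card_sdiff_add_card_inf hC hD
    ⟨0, H.zero_mem, by rwa [add_zero]⟩ ⟨0, K.zero_mem, by rwa [add_zero]⟩
  have hCD := ncard_add_ncard_le_card_sdiff_add_card_inf hD hC hK hH
  have hHsplit : {p | p ∈ H ∧ x + p ∈ D}.ncard + {p | p ∈ H ∧ x + p ∉ D}.ncard = Nat.card H :=
    Set.ncard_inter_add_ncard_sdiff_eq_ncard (H : Set G) {p | x + p ∈ D}
  have hKsplit : {q | q ∈ K ∧ x + q ∈ C}.ncard + {q | q ∈ K ∧ x + q ∉ C}.ncard = Nat.card K :=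
    Set.ncard_inter_add_ncard_sdiff_eq_ncard (K : Set G) {q | x + q ∈ C}
  rw [inf_comm K H] at hCD
  lia

lemma min_card_add_card_le_card_union_add_card_inf (hC : H ≤ stabilizer G C)
    (hD : K ≤ stabilizer G D) (hCD : ¬ C ⊆ D) (hDC : ¬ D ⊆ C) :
    min (#C + Nat.card H) (#D + Nat.card K) ≤
      #(C ∪ D) + Nat.card (H ⊓ K : AddSubgroup G) := by
  wlog hle : #(D \ C) ≤ #(C \ D) generalizing C D H K
  · rw [min_comm, union_comm, inf_comm H K]
    exact this hD hC hDC hCD (le_of_not_ge hle)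
  by_contra! hlt
  obtain ⟨hltC, hltD⟩ := lt_min_iff.1 hlt
  have hunionC : #(D \ C) + #C = #(C ∪ D) := by rw [card_sdiff_add_card, union_comm]
  have hunionD : #(C \ D) + #D = #(C ∪ D) := card_sdiff_add_card C D
  obtain ⟨x, hxD, hxC⟩ := not_subset.1 hDC
  have hH : ∃ p ∈ H, x + p ∉ D := by
    by_contra! hcoset
    have hcard : Nat.card H ≤ #(D \ C) := card_le_card_of_forall_add_mem fun p hp =>
      mem_sdiff.2 ⟨hcoset p hp, by rwa [add_mem_iff_of_mem_stabilizer (hC hp)]⟩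
    lia
  have hK : ∃ q ∈ K, x + q ∈ C := by
    by_contra! hcoset
    have hcard : Nat.card K ≤ #(D \ C) := card_le_card_of_forall_add_mem fun q hq =>
      mem_sdiff.2 ⟨by rwa [add_mem_iff_of_mem_stabilizer (hD hq)], hcoset q hq⟩
    lia
  have hsum := card_add_card_le_card_sdiff_add_card_sdiff hC hD hxD hxC hH hK
  lia

end KneserLemma

lemma min_card_add_card_stabilizer_le_card_union_add (C D : Finset G) :
    min (#C + Nat.card (stabilizer G C)) (#D + Nat.card (stabilizer G D)) ≤
      #(C ∪ D) + Nat.card (stabilizer G (C ∪ D)) := by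
  by_cases hCD : C ⊆ D
  · rw [union_eq_right.2 hCD]
    exact min_le_right _ _
  by_cases hDC : D ⊆ C
  · rw [union_eq_left.2 hDC]
    exact min_le_left _ _
  have hC : C.Nonempty := nonempty_iff_ne_empty.2 fun h => hCD (h ▸ empty_subset D)
  have hD : D.Nonempty := nonempty_iff_ne_empty.2 fun h => hDC (h ▸ empty_subset C)
  have := finite_stabilizer_of_nonempty hC
  have := finite_stabilizer_of_nonempty hD
  have := finite_stabilizer_of_nonempty (hC.mono (subset_union_left (s₂ := D)))
  have hstab : stabilizer G C ⊓ stabilizer G D ≤ stabilizer G (C ∪ D) := fun g hg => by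
    rw [mem_stabilizer_iff, vadd_finset_union, hg.1, hg.2]
  calc min (#C + Nat.card (stabilizer G C)) (#D + Nat.card (stabilizer G D))
      ≤ #(C ∪ D) + Nat.card (stabilizer G C ⊓ stabilizer G D : AddSubgroup G) :=
        min_card_add_card_le_card_union_add_card_inf le_rfl le_rfl hCD hDC
    _ ≤ #(C ∪ D) + Nat.card (stabilizer G (C ∪ D)) := by
        gcongr
        exact AddSubgroup.card_le_of_le hstab

lemma card_le_card_stabilizer_of_vadd_subset {A B : Finset G} {b : G} (hA : A.Nonempty)
    (h : ∀ a ∈ A, (a - b) +ᵥ B ⊆ A) : #B ≤ Nat.card (stabilizer G A) := by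
  have := finite_stabilizer_of_nonempty hA
  have hsub : -b +ᵥ (B : Set G) ⊆ stabilizer G A := by
    rintro _ ⟨b', hb', rfl⟩
    refine mem_stabilizer_finset'.2 fun a ha => h a ha ?_
    refine mem_vadd_finset.2 ⟨b', hb', ?_⟩
    simp only [vadd_eq_add]
    abel
  calc #B = (-b +ᵥ (B : Set G)).ncard := by rw [Set.ncard_vadd_set, Set.ncard_coe_finset]
    _ ≤ (stabilizer G A : Set G).ncard := Set.ncard_le_ncard hsub

lemma exists_subset_add_card_add_card_le (A B : Finset G) {a b : G} (ha : a ∈ A) (hb : b ∈ B) :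
    ∃ C ⊆ A + B, a + b ∈ C ∧ #A + #B ≤ #C + Nat.card (stabilizer G C) := by
  induction hn : #B using Nat.strong_induction_on generalizing A B with
  | _ n ih =>
  subst hn
  by_cases h : ∀ a' ∈ A, (a' - b) +ᵥ B ⊆ A
  · refine ⟨b +ᵥ A, ?_, mem_vadd_finset.2 ⟨a, ha, add_comm b a⟩, ?_⟩
    · rw [add_comm]
      exact vadd_finset_subset_add hb
    · rw [card_vadd_finset, stabilizer_vadd_eq_right]
      gcongr
      exact card_le_card_stabilizer_of_vadd_subset ⟨a, ha⟩ h
  push Not at h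
  obtain ⟨a', ha', hnsub⟩ := h
  let e := a' - b
  let A' := (addDysonETransform e (A, B)).1
  let B' := (addDysonETransform e (A, B)).2
  have hcard : #A' + #B' = #A + #B := addDysonETransform.card e (A, B)
  have hlt : #B' < #B := by
    refine card_lt_card (inter_subset_left.ssubset_of_ne fun heq => hnsub ?_)
    rw [vadd_finset_subset_iff]
    exact inter_eq_left.1 heq
  have haA' : a ∈ A' := mem_union_left _ ha
  have hbB' : b ∈ B' := mem_inter.2 ⟨hb, mem_vadd_finset.2 ⟨a', ha', by simp [e]⟩⟩
  obtain ⟨C, hC, habC, hle⟩ := ih #B' hlt A' B' haA' hbB' rfl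
  exact ⟨C, hC.trans (addDysonETransform.subset e (A, B)), habC, hcard ▸ hle⟩

theorem card_add_card_le_card_add_add_card_stabilizer {A B : Finset G} (hA : A.Nonempty)
    (hB : B.Nonempty) : #A + #B ≤ #(A + B) + Nat.card (stabilizer G (A + B)) := by
  have hlocal (z : G) (hz : z ∈ A + B) :
      ∃ C ⊆ A + B, z ∈ C ∧ #A + #B ≤ #C + Nat.card (stabilizer G C) := by
    obtain ⟨a, ha, b, hb, rfl⟩ := mem_add.1 hz
    exact exists_subset_add_card_add_card_le A B ha hb
  choose! C hsub hmem hcard using hlocal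
  have hcover : (A + B).sup' (hA.add hB) C = A + B :=
    le_antisymm (sup'_le _ _ hsub) fun z hz => le_sup' C hz (hmem z hz)
  rw [← hcover]
  exact sup'_induction (p := fun D => #A + #B ≤ #D + Nat.card (stabilizer G D)) _ _
    (fun D hD E hE => (le_min hD hE).trans
      (min_card_add_card_stabilizer_le_card_union_add D E)) hcard

end Kneser

section Aperiodic

variable {G : Type*} [AddCommGroup G] [DecidableEq G]

lemma isAperiodic_iff_stabilizer_eq_bot {A : Finset G} :
    IsAperiodic A ↔ stabilizer G A = ⊥ := by
  simp only [IsAperiodic, AddSubgroup.eq_bot_iff_forall, mem_stabilizer_iff, add_comm A,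
    singleton_add]

namespace IsAperiodic

lemma subsingleton_of_empty (h : IsAperiodic (∅ : Finset G)) : Subsingleton G := by
  rw [isAperiodic_iff_stabilizer_eq_bot, stabilizer_finset_empty] at h
  exact AddSubgroup.subsingleton_iff.1 (subsingleton_of_bot_eq_top h.symm)

theorem card_add_card_le {A B : Finset G} (h : IsAperiodic (A + B)) :
    #A + #B ≤ #(A + B) + 1 := by
  rcases A.eq_empty_or_nonempty with rfl | hA
  · rw [empty_add] at h ⊢
    have := h.subsingleton_of_empty
    simpa using card_le_one_of_subsingleton B
  rcases B.eq_empty_or_nonempty with rfl | hB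
  · rw [add_empty] at h ⊢
    have := h.subsingleton_of_empty
    simpa using card_le_one_of_subsingleton A
  have hKneser := card_add_card_le_card_add_add_card_stabilizer hA hB
  rwa [isAperiodic_iff_stabilizer_eq_bot.1 h, AddSubgroup.card_bot] at hKneser

lemma of_add_left {A B : Finset G} (h : IsAperiodic (A + B)) : IsAperiodic B :=
  fun g hg => h g (by rw [add_assoc, hg])

end IsAperiodic

lemma compl_add_sub_eq_compl_of_card {S T : Finset G} (hap : IsAperiodic (S + T))
    (hcard : #(S + T) + 1 = #S + #T) :
    ((T + S : Finset G) : Set G)ᶜ - S = (T : Set G)ᶜ := by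
  ext x
  constructor
  · rintro ⟨y, hy, s, hs, rfl⟩ hT
    exact hy (mem_add.2 ⟨y - s, hT, s, hs, sub_add_cancel y s⟩)
  · intro hxT
    by_contra hx
    have hxS : ∀ s ∈ S, s + x ∈ S + T := fun s hs => by
      by_contra hsx
      exact hx ⟨s + x, by rwa [add_comm T S], s, hs, add_sub_cancel_left s x⟩
    have hinsert : S + insert x T = S + T := by
      refine (add_subset_iff.2 fun s hs t ht => ?_).antisymm
        (add_subset_add_left (subset_insert x T))
      rcases mem_insert.1 ht with rfl | ht
      exacts [hxS s hs, add_mem_add hs ht]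
    have hKneser : #S + #(insert x T) ≤ #(S + insert x T) + 1 :=
      IsAperiodic.card_add_card_le (by rwa [hinsert])
    rw [hinsert, card_insert_of_notMem hxT] at hKneser
    lia

theorem stmt8_general (S T : Finset G) (hap : IsAperiodic (S + T))
    (hcard : #(S + T) + 1 = #S + #T) :
    stabilizer G (((T + S : Finset G) : Set G)ᶜ - S) = ⊥ ∧
      ((T + S : Finset G) : Set G)ᶜ - S = (T : Set G)ᶜ := by
  have hdual := compl_add_sub_eq_compl_of_card hap hcard
  refine ⟨?_, hdual⟩
  rw [hdual, stabilizer_compl_set, stabilizer_coe_finset]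
  exact isAperiodic_iff_stabilizer_eq_bot.1 hap.of_add_left

lemma card_univ_sdiff_add_one [Fintype G] {S T : Finset G} (hcard : #(S + T) + 1 = #S + #T) :
    #(univ \ T) + 1 = #(univ \ (T + S)) + #S := by
  have hT : #(univ \ T) + #T = Fintype.card G := card_sdiff_add_card_eq_card (subset_univ T)
  have hTS : #(univ \ (T + S)) + #(T + S) = Fintype.card G :=
    card_sdiff_add_card_eq_card (subset_univ (T + S))
  rw [add_comm T S] at hTS ⊢
  lia

end Aperiodic

theorem stmt8 {G : Type*} [AddCommGroup G] [Fintype G] [DecidableEq G] (S T : Finset G)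
    (hgen : AddSubgroup.closure (S : Set G) = ⊤)
    (hap : IsAperiodic (S + T)) (h0S : (0 : G) ∈ S) (h0T : (0 : G) ∈ T)
    (hcard : (S + T).card + 1 = S.card + T.card) :
    IsAperiodic ((Finset.univ \ (T + S)) - S) ∧
      ((Finset.univ \ (T + S)) - S).card + 1 = (Finset.univ \ (T + S)).card + S.card := by
  have hgeneral := stmt8_general S T hap hcard
  simp only [← coe_compl, ← coe_sub, stabilizer_coe_finset, coe_inj, compl_eq_univ_sdiff,
    ← isAperiodic_iff_stabilizer_eq_bot] at hgeneral
  obtain ⟨haperiodic, hdual⟩ := hgeneral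
  exact ⟨haperiodic, by rw [hdual, card_univ_sdiff_add_one hcard]⟩
end

section
/- Let S be a finite generating subset of an abelian group G with 0 ∈ S, |S| ≤ (|G|+1)/2 and κ₂(S) ≤ |S| - 1. Let H be a hyper-atom of S (a subgroup of maximal cardinality which is a 1-fragment of S) and φ : G → G/H the canonical morphism. Then φ(S) is either an arithmetic progression in G/H or a Vosper subset of G/H. -/
open scoped Pointwise Classical

/-- The `k`-th connectivity `κ_k(S)`: minimum of `|X + S| - |X|` over finite `X`
with `|X| ≥ k` and `|X + S| ≤ |G| - k`, with `min ∅ = |G| - 2k + 1`. -/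
noncomputable def kappa {G : Type*} [AddCommGroup G] [DecidableEq G]
    (k : ℕ) (S : Finset G) : ℕ :=
  if ∃ X : Finset G, k ≤ X.card ∧ (X + S).card ≤ Nat.card G - k then
    sInf {d : ℕ | ∃ X : Finset G, k ≤ X.card ∧ (X + S).card ≤ Nat.card G - k ∧
      d = (X + S).card - X.card}
  else Nat.card G - 2 * k + 1

/-- `S` is `k`-separable: some `X` has `|X| ≥ k` and `|G \ (X + S)| ≥ k`. -/
def KSeparable {G : Type*} [AddCommGroup G] [DecidableEq G] (k : ℕ) (S : Finset G) : Prop :=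
  ∃ X : Finset G, k ≤ X.card ∧ (X + S).card ≤ Nat.card G - k

/-- `X` is a `k`-fragment of `S`: `|X| ≥ k`, `|G \ (X + S)| ≥ k` and
`|X + S| - |X| = κ_k(S)`. -/
def IsFragment {G : Type*} [AddCommGroup G] [DecidableEq G] (k : ℕ) (S X : Finset G) : Prop :=
  k ≤ X.card ∧ (X + S).card ≤ Nat.card G - k ∧ (X + S).card - X.card = kappa k S

/-- A hyper-atom of `S` is a subgroup of maximal cardinality which is a `1`-fragment. -/
def IsHyperAtom {G : Type*} [AddCommGroup G] [DecidableEq G]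
    (S : Finset G) (H : AddSubgroup G) : Prop :=
  (∃ HF : Finset G, (HF : Set G) = (H : Set G) ∧ IsFragment 1 S HF) ∧
  ∀ (K : AddSubgroup G) (KF : Finset G), (KF : Set G) = (K : Set G) →
    IsFragment 1 S KF → Nat.card K ≤ Nat.card H

/-- `A` is an arithmetic progression with difference `d`. -/
def IsAPWith {G : Type*} [AddCommGroup G] [DecidableEq G] (d : G) (A : Finset G) : Prop :=
  ∃ (a : G) (k : ℕ), A.card = k ∧
    A = (Finset.range k).image (fun i => a + (i : ℕ) • d)

/-- `A` is a Vosper subset: for every `X` with `|X| ≥ 2`,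
`|X + A| ≥ min (|G| - 1) (|X| + |A|)`. -/
def IsVosper {G : Type*} [AddCommGroup G] [DecidableEq G] (A : Finset G) : Prop :=
  ∀ X : Finset G, 2 ≤ X.card → min (Nat.card G - 1) (X.card + A.card) ≤ (X + A).card

/-!
Pass to `A = φ(S)`: maximality of the hyper-atom `H` says that the trivial subgroup is a hyper-atom
of `A`, so every nontrivial subgroup `K` with `|K + A| < |K| + |A|` is the whole group.

If `A` is not a Vosper subset, take a `2`-atom `M ∋ 0` of `A`; then `|M + A| < |M| + |A|`. Two
distinct `2`-atoms meet in at most one point, so `M` is either a subgroup, which is excluded, or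
a Sidon set. A Sidon set grows in the subgroup `K` it generates as in Vosper's theorem, because
`|M + B| ≥ r |M| - r (r - 1) / 2` for every `r ≤ |B|`; this passes the small growth from `M` to `K`,
and hence `K` is the whole group. If `|M| ≥ 3`, the set `M` is then itself a Vosper subset,
contradicting `|M + A| < |M| + |A|`. So `M = {0, d}`, and `|A + {0, d}| ≤ |A| + 1` makes `A` an
arithmetic progression with difference `d`.
-/

open scoped Finset

section Connectivity

variable {G : Type*} [AddCommGroup G] [DecidableEq G] {k : ℕ} {S X Y M N : Finset G}

lemma kappa_le (hX : k ≤ #X) (hXS : #(X + S) ≤ Nat.card G - k) :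
    kappa k S ≤ #(X + S) - #X := by
  rw [kappa, if_pos ⟨X, hX, hXS⟩]
  exact Nat.sInf_le ⟨X, hX, hXS, rfl⟩

lemma KSeparable.exists_isFragment (h : KSeparable k S) : ∃ X, IsFragment k S X := by
  obtain ⟨Y, hY, hYS⟩ := h
  obtain ⟨X, hX, hXS, hκ⟩ := Nat.sInf_mem
    (s := {d | ∃ X : Finset G, k ≤ #X ∧ #(X + S) ≤ Nat.card G - k ∧ d = #(X + S) - #X})
    ⟨_, Y, hY, hYS, rfl⟩
  exact ⟨X, hX, hXS, by rw [kappa, if_pos ⟨Y, hY, hYS⟩, hκ]⟩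

lemma card_add_kappa_le (hS : S.Nonempty) (hX : k ≤ #X) (hXS : #(X + S) ≤ Nat.card G - k) :
    #X + kappa k S ≤ #(X + S) := by
  have := kappa_le hX hXS
  have : #X ≤ #(X + S) := Finset.card_le_card_add_right hS
  lia

lemma IsFragment.card_add_eq (hX : IsFragment k S X) (hS : S.Nonempty) :
    #(X + S) = #X + kappa k S := by
  have := hX.2.2
  have : #X ≤ #(X + S) := Finset.card_le_card_add_right hS
  lia

lemma IsFragment.card_add_add_le [Finite G] (hX : IsFragment k S X) :
    #(X + S) + k ≤ Nat.card G := by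
  have := Fintype.ofFinite G
  have : #X ≤ Nat.card G := Nat.card_eq_fintype_card (α := G) ▸ X.card_le_univ
  have := hX.1
  have := hX.2.1
  lia

lemma IsFragment.vadd (hX : IsFragment k S X) (g : G) : IsFragment k S (g +ᵥ X) := by
  simpa only [IsFragment, vadd_add_assoc, Finset.card_vadd_finset] using hX

lemma IsFragment.neg_compl_add [Fintype G] (hX : IsFragment k S X) (hS : S.Nonempty) :
    IsFragment k S (-(X + S)ᶜ) := by
  have hdual : -(X + S)ᶜ + S ⊆ (-X)ᶜ := by
    intro z hz
    obtain ⟨w, hw, s, hs, rfl⟩ := Finset.mem_add.1 hz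
    rw [Finset.mem_compl, Finset.mem_neg']
    intro hmem
    refine Finset.mem_compl.1 (Finset.mem_neg'.1 hw) ?_
    simpa using Finset.add_mem_add hmem hs
  have hle := Finset.card_le_card hdual
  have hXS := hX.card_add_add_le
  rw [Nat.card_eq_fintype_card] at hXS
  have hcard : #(-(X + S)ᶜ) = Fintype.card G - #(X + S) := by
    rw [Finset.card_neg, Finset.card_compl]
  rw [Finset.card_compl, Finset.card_neg] at hle
  have hκ := hX.card_add_eq hS
  have hk := hX.1
  have hk' : k ≤ #(-(X + S)ᶜ) := by lia
  have hS' : #(-(X + S)ᶜ + S) ≤ Nat.card G - k := by rw [Nat.card_eq_fintype_card]; lia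
  have := card_add_kappa_le hS hk' hS'
  exact ⟨hk', hS', by lia⟩

lemma card_union_add_add_card_inter_add_le (X Y S : Finset G) :
    #((X ∪ Y) + S) + #((X ∩ Y) + S) ≤ #(X + S) + #(Y + S) := by
  rw [Finset.union_add, ← Finset.card_union_add_card_inter (X + S)]
  gcongr
  exact Finset.inter_add_subset

lemma IsFragment.inter (hX : IsFragment k S X) (hY : IsFragment k S Y) (hS : S.Nonempty)
    (hXY : #X + #(Y + S) ≤ Nat.card G) (hk : k ≤ #(X ∩ Y)) : IsFragment k S (X ∩ Y) := by
  have hsub := card_union_add_add_card_inter_add_le X Y S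
  have hcard := Finset.card_union_add_card_inter X Y
  have hXS := hX.card_add_eq hS
  have hYS := hY.card_add_eq hS
  have hle : #(X ∩ Y + S) ≤ Nat.card G - k :=
    (Finset.card_le_card <| Finset.add_subset_add_right Finset.inter_subset_left).trans hX.2.1
  have hinter := card_add_kappa_le hS hk hle
  refine ⟨hk, hle, ?_⟩
  by_contra hne
  have hunion := card_add_kappa_le hS
    (hX.1.trans (Finset.card_le_card (Finset.subset_union_left (s₂ := Y)))) (by lia)
  lia

/-- A `k`-atom of `S`, in Hamidoune's sense: a `k`-fragment of minimal cardinality. -/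
def IsKAtom (k : ℕ) (S M : Finset G) : Prop := MinimalFor (IsFragment k S) Finset.card M

lemma KSeparable.exists_isKAtom (h : KSeparable k S) : ∃ M, IsKAtom k S M :=
  exists_minimalFor_of_wellFoundedLT _ _ h.exists_isFragment

lemma IsKAtom.vadd (hM : IsKAtom k S M) (g : G) : IsKAtom k S (g +ᵥ M) :=
  ⟨hM.1.vadd g, fun N hN hNM ↦ by
    rw [Finset.card_vadd_finset] at hNM ⊢
    exact hM.2 hN hNM⟩

lemma IsKAtom.card_le (hM : IsKAtom k S M) (hX : IsFragment k S X) : #M ≤ #X :=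
  (le_total #M #X).elim id (hM.2 hX)

lemma IsKAtom.card_inter_lt [Finite G] (hM : IsKAtom k S M) (hN : IsKAtom k S N)
    (hS : S.Nonempty) (hne : M ≠ N) : #(M ∩ N) < k := by
  have := Fintype.ofFinite G
  by_contra! hk
  have hdual : #M + #(N + S) ≤ Nat.card G := by
    have hle := hM.card_le (hN.1.neg_compl_add hS)
    rw [Finset.card_neg, Finset.card_compl, ← Nat.card_eq_fintype_card] at hle
    have := hN.1.card_add_add_le
    lia
  have hinter := hM.1.inter hN.1 hS hdual hk
  have hMN : M ⊆ N :=
    Finset.inter_eq_left.1 <| Finset.eq_of_subset_of_card_le Finset.inter_subset_left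
      (hM.card_le hinter)
  exact hne (Finset.eq_of_subset_of_card_le hMN (hN.card_le hM.1))

/-- A Sidon set: every nonzero element has at most one representation as a difference of two
elements of `M`, that is, `M` meets each of its nontrivial translates in at most one point. -/
def IsSidon (M : Finset G) : Prop := ∀ x : G, x ≠ 0 → #(M ∩ (x +ᵥ M)) ≤ 1

theorem IsKAtom.eq_addSubgroup_or_isSidon [Finite G] (hM : IsKAtom 2 S M) (hS : S.Nonempty)
    (h0 : 0 ∈ M) : (∃ K : AddSubgroup G, (M : Set G) = K) ∨ IsSidon M := by
  refine or_iff_not_imp_right.2 fun hSidon ↦ ?_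
  have hvadd {x : G} (hx : 2 ≤ #(M ∩ (x +ᵥ M))) : x +ᵥ M = M := by
    by_contra hne
    exact (hM.card_inter_lt (hM.vadd x) hS (Ne.symm hne)).not_ge hx
  unfold IsSidon at hSidon
  push Not at hSidon
  obtain ⟨x, hx0, hx⟩ := hSidon
  have hxM {z : G} (hz : z ∈ M) : x + z ∈ M := by
    simpa only [hvadd hx, vadd_eq_add] using Finset.vadd_mem_vadd_finset (a := x) hz
  have hneg {m : G} (hm : m ∈ M) : -m +ᵥ M = M := by
    refine hvadd (Finset.one_lt_card.2 ⟨0, ?_, x, ?_, hx0.symm⟩)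
    · exact Finset.mem_inter.2 ⟨h0, Finset.mem_neg_vadd_finset_iff.2 (by simpa using hm)⟩
    · refine Finset.mem_inter.2 ⟨by simpa using hxM h0, Finset.mem_neg_vadd_finset_iff.2 ?_⟩
      simpa only [vadd_eq_add, add_comm] using hxM hm
  refine ⟨AddSubgroup.ofSub M ⟨0, h0⟩ fun z hz m hm ↦ ?_, rfl⟩
  have := Finset.vadd_mem_vadd_finset (a := -m) (Finset.mem_coe.1 hz)
  rwa [hneg hm, vadd_eq_add, add_comm] at this

lemma exists_isKAtom_two_of_not_isVosper [Finite G] (hS : S.Nonempty) (hV : ¬ IsVosper S) :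
    ∃ M, IsKAtom 2 S M ∧ 0 ∈ M ∧ #(M + S) < #M + #S := by
  unfold IsVosper at hV
  push Not at hV
  obtain ⟨X, hX, hXS⟩ := hV
  have hXS' := lt_min_iff.1 hXS
  have hsep : KSeparable 2 S := ⟨X, hX, by lia⟩
  obtain ⟨M, hM⟩ := hsep.exists_isKAtom
  obtain ⟨m, hm⟩ : M.Nonempty := Finset.card_pos.1 (by have := hM.1.1; lia)
  refine ⟨-m +ᵥ M, hM.vadd _, Finset.mem_neg_vadd_finset_iff.2 (by simpa using hm), ?_⟩
  have hκ := card_add_kappa_le hS hX (by lia)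
  have := (hM.vadd (-m)).1.card_add_eq hS
  lia

end Connectivity

section Subgroup

variable {G : Type*} [AddCommGroup G] {K : AddSubgroup G} {A F M Y : Finset G} {a : G}

lemma card_eq_natCard_of_coe_eq (hF : (F : Set G) = K) : #F = Nat.card K := by
  rw [← Set.ncard_coe_finset, hF, ← Nat.card_coe_set_eq]
  rfl

variable [DecidableEq G]

lemma two_mul_card_le_card_add (hF : (F : Set G) = K) (h0 : 0 ∈ A) (hA : ¬ (A : Set G) ⊆ K) :
    2 * #F ≤ #(F + A) := by
  obtain ⟨a, ha, haK⟩ := Set.not_subset.1 hA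
  have hmem {x : G} : x ∈ F ↔ x ∈ K := by rw [← Finset.mem_coe, hF, SetLike.mem_coe]
  have hdisj : Disjoint F (a +ᵥ F) := by
    rw [Finset.disjoint_left]
    intro z hz hza
    obtain ⟨w, hw, rfl⟩ := Finset.mem_vadd_finset.1 hza
    exact haK ((K.add_mem_cancel_right (hmem.1 hw)).1 (hmem.1 hz))
  have hsub : F ∪ (a +ᵥ F) ⊆ F + A := by
    rw [add_comm F]
    exact Finset.union_subset (Finset.subset_add_right F h0) (Finset.vadd_finset_subset_add ha)
  have := Finset.card_le_card hsub
  rw [Finset.card_union_of_disjoint hdisj, Finset.card_vadd_finset] at this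
  lia

lemma card_add_lt_of_le_stabilizer (hF : (F : Set G) = K) (ha : a ∈ A)
    (hK : K ≤ AddAction.stabilizer G {b ∈ A | b - a ∉ K}) : #(F + A) < #F + #A := by
  have hmem {x : G} : x ∈ F ↔ x ∈ K := by rw [← Finset.mem_coe, hF, SetLike.mem_coe]
  have hsub : F + A ⊆ A ∪ (a +ᵥ F) := by
    intro z hz
    obtain ⟨k, hk, b, hb, rfl⟩ := Finset.mem_add.1 hz
    rw [hmem] at hk
    by_cases hbK : b - a ∈ K
    · refine Finset.mem_union_right _ (Finset.mem_vadd_finset.2 ⟨k + (b - a), ?_, ?_⟩)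
      · exact hmem.2 (K.add_mem hk hbK)
      · rw [vadd_eq_add]; abel
    · refine Finset.mem_union_left _ (Finset.filter_subset (fun b ↦ b - a ∉ K) A ?_)
      exact (AddAction.mem_stabilizer_finset'.1 (hK hk)) (Finset.mem_filter.2 ⟨hb, hbK⟩)
  have hle := Finset.card_le_card hsub
  have hunion := Finset.card_union_add_card_inter A (a +ᵥ F)
  have hinter : 0 < #(A ∩ (a +ᵥ F)) := Finset.card_pos.2
    ⟨a, Finset.mem_inter.2 ⟨ha, Finset.mem_vadd_finset.2 ⟨0, hmem.2 K.zero_mem, add_zero a⟩⟩⟩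
  rw [Finset.card_vadd_finset] at hunion
  lia

lemma natCard_le_card_of_le_stabilizer (hY : Y.Nonempty) (hK : K ≤ AddAction.stabilizer G Y) :
    Nat.card K ≤ #Y := by
  obtain ⟨y, hy⟩ := hY
  have hmem (k : K) : (k : G) + y ∈ Y := AddAction.mem_stabilizer_finset'.1 (hK k.2) hy
  rw [← Nat.card_eq_finsetCard Y]
  exact Nat.card_le_card_of_injective (fun k : K ↦ (⟨k + y, hmem k⟩ : Y)) fun k l hkl ↦ by
    simpa using hkl

lemma le_stabilizer_of_card_add_le (h0 : 0 ∈ M) (hMK : AddSubgroup.closure (M : Set G) = K)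
    (h : #(Y + M) ≤ #Y) : K ≤ AddAction.stabilizer G Y := by
  have hYM : Y = Y + M := Finset.eq_of_subset_of_card_le (Finset.subset_add_left Y h0) h
  refine hMK ▸ AddSubgroup.closure_le _ |>.2 fun m hm ↦ AddAction.mem_stabilizer_finset'.2 ?_
  intro y hy
  rw [vadd_eq_add, add_comm, hYM]
  exact Finset.add_mem_add hy hm

lemma card_lt_card_add_of_closure_eq (h0 : 0 ∈ M) (hMK : AddSubgroup.closure (M : Set G) = K)
    (hY : Y.Nonempty) (hlt : #(Y + M) < Nat.card K) : #Y < #(Y + M) := by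
  by_contra! hle
  have := natCard_le_card_of_le_stabilizer hY (le_stabilizer_of_card_add_le h0 hMK hle)
  have : #Y ≤ #(Y + M) := Finset.card_le_card_add_right ⟨0, h0⟩
  lia

lemma card_filter_add_add_card_filter_add (hMK : (M : Set G) ⊆ K) (A : Finset G) (a : G) :
    #({b ∈ A | b - a ∈ K} + M) + #({b ∈ A | b - a ∉ K} + M) = #(A + M) := by
  rw [← Finset.card_union_of_disjoint, ← Finset.union_add, Finset.filter_union_filter_not_eq]
  rw [Finset.disjoint_left]
  intro z hz hz'
  obtain ⟨b, hb, m, hm, rfl⟩ := Finset.mem_add.1 hz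
  obtain ⟨c, hc, n, hn, hcn⟩ := Finset.mem_add.1 hz'
  refine (Finset.mem_filter.1 hc).2 ?_
  have hc_eq : c - a = b - a + m - n := by rw [eq_sub_of_add_eq hcn]; abel
  rw [hc_eq]
  exact K.sub_mem (K.add_mem (Finset.mem_filter.1 hb).2 (hMK hm)) (hMK hn)

lemma add_subset_add_of_natCard_le (hF : (F : Set G) = K) (hMK : (M : Set G) ⊆ K)
    (h : ∀ a ∈ A, Nat.card K ≤ #({b ∈ A | b - a ∈ K} + M)) : F + A ⊆ A + M := by
  have hmem {x : G} : x ∈ F ↔ x ∈ K := by rw [← Finset.mem_coe, hF, SetLike.mem_coe]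
  intro z hz
  obtain ⟨k, hk, a, ha, rfl⟩ := Finset.mem_add.1 hz
  have hsub : {b ∈ A | b - a ∈ K} + M ⊆ a +ᵥ F := by
    intro w hw
    obtain ⟨b, hb, m, hm, rfl⟩ := Finset.mem_add.1 hw
    refine Finset.mem_vadd_finset.2 ⟨b - a + m, ?_, by rw [vadd_eq_add]; abel⟩
    exact hmem.2 (K.add_mem (Finset.mem_filter.1 hb).2 (hMK hm))
  have heq : {b ∈ A | b - a ∈ K} + M = a +ᵥ F := Finset.eq_of_subset_of_card_le hsub <| by
    rw [Finset.card_vadd_finset, card_eq_natCard_of_coe_eq hF]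
    exact h a ha
  refine Finset.add_subset_add_right (Finset.filter_subset (· - a ∈ K) A) ?_
  rw [heq, add_comm, ← vadd_eq_add]
  exact Finset.vadd_mem_vadd_finset hk

/- Split `A` along the cosets of `K`. Either `M` fills each coset that `A` meets, or some coset
absorbs the whole growth `#M - 1` of `A + M`, and then the rest of `A` is `K`-periodic. -/
theorem card_add_lt_of_closure_eq (hF : (F : Set G) = K) (h0 : 0 ∈ M)
    (hMK : AddSubgroup.closure (M : Set G) = K)
    (hM : ∀ Y : Finset G, Y.Nonempty → (Y : Set G) ⊆ K → #(Y + M) < Nat.card K →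
      #Y + #M ≤ #(Y + M) + 1)
    (hlt : #(A + M) < #A + #M) : #(F + A) < #F + #A := by
  have hMsub : (M : Set G) ⊆ K := hMK ▸ AddSubgroup.subset_closure
  by_cases! hfull : ∀ a ∈ A, Nat.card K ≤ #({b ∈ A | b - a ∈ K} + M)
  · have := Finset.card_le_card (add_subset_add_of_natCard_le hF hMsub hfull)
    have := Finset.card_le_card (Finset.coe_subset.1 (hF ▸ hMsub))
    lia
  · obtain ⟨a, ha, hlt_coset⟩ := hfull
    have hgrow : #{b ∈ A | b - a ∈ K} + #M ≤ #({b ∈ A | b - a ∈ K} + M) + 1 := by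
      have h := hM (-a +ᵥ {b ∈ A | b - a ∈ K})
        (Finset.vadd_finset_nonempty.2 ⟨a, by simp [ha]⟩) ?_ ?_
      · simpa only [vadd_add_assoc, Finset.card_vadd_finset] using h
      · intro x hx
        obtain ⟨b, hb, rfl⟩ := Finset.mem_vadd_finset.1 hx
        rw [vadd_eq_add, neg_add_eq_sub]
        exact (Finset.mem_filter.1 hb).2
      · simpa only [vadd_add_assoc, Finset.card_vadd_finset] using hlt_coset
    have hsum := card_filter_add_add_card_filter_add hMsub A a
    have hA := Finset.card_filter_add_card_filter_not (s := A) (· - a ∈ K)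
    exact card_add_lt_of_le_stabilizer hF ha (le_stabilizer_of_card_add_le h0 hMK (by lia))

end Subgroup

section Sidon

variable {G : Type*} [AddCommGroup G] [DecidableEq G] {A B M N Y : Finset G} {a x y : G}

lemma IsSidon.card_vadd_inter_vadd_le (hM : IsSidon M) (hxy : x ≠ y) :
    #((x +ᵥ M) ∩ (y +ᵥ M)) ≤ 1 := by
  have h := hM (y - x) (sub_ne_zero.2 hxy.symm)
  rwa [← Finset.card_vadd_finset x, Finset.vadd_finset_inter, vadd_vadd, add_sub_cancel] at h

lemma IsSidon.card_mul_card_le_card_add_add_choose (hM : IsSidon M) (B : Finset G) :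
    #B * #M ≤ #(M + B) + (#B).choose 2 := by
  induction B using Finset.induction_on with
  | empty => simp
  | insert b B hb ih =>
    have hinter : #((b +ᵥ M) ∩ (M + B)) ≤ #B := by
      rw [add_comm M B, ← vadd_eq_add, ← Finset.biUnion_vadd_finset, Finset.inter_biUnion]
      refine Finset.card_biUnion_le.trans (Finset.sum_le_card_nsmul _ _ 1 fun c hc ↦ ?_) |>.trans
        (by simp)
      exact hM.card_vadd_inter_vadd_le (by rintro rfl; exact hb hc)
    have hunion := Finset.card_union_add_card_inter (b +ᵥ M) (M + B)
    rw [Finset.card_vadd_finset] at hunion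
    have hinsert : M + insert b B = (b +ᵥ M) ∪ (M + B) := by
      rw [Finset.insert_eq, Finset.add_union, add_comm M {b}, ← vadd_eq_add, Finset.singleton_vadd]
    rw [hinsert, Finset.card_insert_of_notMem hb, Nat.choose_succ_succ' _ 1,
      Nat.choose_one_right, add_one_mul]
    lia

lemma IsSidon.mul_card_le_card_add_add_choose (hM : IsSidon M) {r : ℕ} (hr : r ≤ #B) :
    r * #M ≤ #(M + B) + r.choose 2 := by
  obtain ⟨C, hCB, rfl⟩ := Finset.exists_subset_card_eq hr
  have := hM.card_mul_card_le_card_add_add_choose C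
  have := Finset.card_le_card (Finset.add_subset_add_left hCB (s := M))
  lia

lemma IsSidon.card_add_card_le (hM : IsSidon M) (hN : IsSidon N) (hM3 : 3 ≤ #M) (hN2 : 2 ≤ #N) :
    #M + #N ≤ #(M + N) := by
  have hM2 : 2 * #M ≤ #(M + N) + 1 := hM.mul_card_le_card_add_add_choose hN2
  by_cases hN3 : 3 ≤ #N
  · have hMN : 3 * #M ≤ #(M + N) + 3 := hM.mul_card_le_card_add_add_choose hN3
    have hNM : 3 * #N ≤ #(N + M) + 3 := hN.mul_card_le_card_add_add_choose hM3
    rw [add_comm N M] at hNM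
    lia
  · lia

theorem IsSidon.isVosper [Finite G] (hM : IsSidon M) (hM3 : 3 ≤ #M) (h0 : 0 ∈ M)
    (hgen : AddSubgroup.closure (M : Set G) = ⊤) : IsVosper M := by
  by_contra hV
  obtain ⟨N, hN, h0N, hNM⟩ := exists_isKAtom_two_of_not_isVosper ⟨0, h0⟩ hV
  have hN2 : 2 ≤ #N := hN.1.1
  obtain ⟨K, hK⟩ | hNsidon := hN.eq_addSubgroup_or_isSidon ⟨0, h0⟩ h0N
  · by_cases hMK : (M : Set G) ⊆ K
    · have hKtop : K = ⊤ := top_unique (hgen.symm.trans_le (AddSubgroup.closure_le K |>.2 hMK))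
      have hcard := card_eq_natCard_of_coe_eq hK
      rw [hKtop, AddSubgroup.card_top] at hcard
      have := hN.1.card_add_add_le
      have : #N ≤ #(N + M) := Finset.card_le_card_add_right ⟨0, h0⟩
      lia
    · have := two_mul_card_le_card_add hK h0 hMK
      have : 2 * #M ≤ #(M + N) + 1 := hM.mul_card_le_card_add_add_choose hN2
      rw [add_comm M N] at this
      lia
  · have := hM.card_add_card_le hNsidon hM3 hN2
    rw [add_comm M N] at this
    lia

lemma card_add_card_le_natCard [Finite G] (h : #(A + B) < Nat.card G) :
    #A + #B ≤ Nat.card G := by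
  have := Fintype.ofFinite G
  rw [Nat.card_eq_fintype_card] at h ⊢
  obtain ⟨g, hg⟩ := Finset.exists_mem_notMem_of_card_lt_card (h.trans_eq Finset.card_univ.symm)
  have hdisj : Disjoint A (g +ᵥ -B) := by
    rw [Finset.disjoint_left]
    intro z hz hzg
    obtain ⟨w, hw, rfl⟩ := Finset.mem_vadd_finset.1 hzg
    refine hg.2 ?_
    simpa using Finset.add_mem_add hz (Finset.mem_neg'.1 hw)
  simpa only [Finset.card_union_of_disjoint hdisj, Finset.card_vadd_finset, Finset.card_neg]
    using Finset.card_le_univ (A ∪ (g +ᵥ -B))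

lemma IsVosper.card_add_card_le [Finite G] (hA : IsVosper A) (hY : Y.Nonempty)
    (hYA : #(Y + A) < Nat.card G) : #Y + #A ≤ #(Y + A) + 1 := by
  obtain hY1 | hY2 : #Y = 1 ∨ 2 ≤ #Y := by have := hY.card_pos; lia
  · have : #A ≤ #(Y + A) := Finset.card_le_card_add_left hY
    lia
  · have := hA Y hY2
    have := card_add_card_le_natCard hYA
    lia

lemma IsSidon.of_image {H : Type*} [AddCommGroup H] [DecidableEq H] {f : G →+ H}
    (hf : Function.Injective f) (hM : IsSidon (M.image f)) : IsSidon M := by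
  intro x hx
  have h := hM (f x) ((map_ne_zero_iff f hf).2 hx)
  rwa [← Finset.image_vadd_distrib, ← Finset.image_inter _ _ hf,
    Finset.card_image_of_injective _ hf] at h

lemma IsSidon.card_add_card_le_of_three_le [Finite G] {K : AddSubgroup G} (hM : IsSidon M)
    (hM3 : 3 ≤ #M) (h0 : 0 ∈ M) (hMK : AddSubgroup.closure (M : Set G) = K) (hY : Y.Nonempty)
    (hYK : (Y : Set G) ⊆ K) (hlt : #(Y + M) < Nat.card K) : #Y + #M ≤ #(Y + M) + 1 := by
  have hinj : Function.Injective K.subtype := K.subtype_injective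
  have lift_image {Z : Finset G} (hZ : (Z : Set G) ⊆ K) :
      ∃ Z' : Finset K, Z'.image K.subtype = Z := by
    simpa using Finset.subset_set_image_iff (f := K.subtype) (s := Set.univ).1
      (by simpa using hZ)
  obtain ⟨M, rfl⟩ := lift_image (hMK ▸ AddSubgroup.subset_closure)
  obtain ⟨Y, rfl⟩ := lift_image hYK
  have hM0 : 0 ∈ M := by simpa using h0
  have hgen : AddSubgroup.closure (M : Set K) = ⊤ := by
    apply AddSubgroup.map_injective hinj
    rw [AddMonoidHom.map_closure, ← Finset.coe_image, hMK, ← AddMonoidHom.range_eq_map,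
      AddSubgroup.range_subtype]
  rw [Finset.card_image_of_injective _ hinj] at hM3
  rw [← Finset.image_add, Finset.card_image_of_injective _ hinj] at hlt ⊢
  rw [Finset.card_image_of_injective _ hinj, Finset.card_image_of_injective _ hinj]
  have hVosper := (IsSidon.of_image hinj hM).isVosper hM3 hM0 hgen
  exact hVosper.card_add_card_le (Finset.image_nonempty.1 hY) hlt

lemma IsSidon.card_add_card_le_of_closure_eq [Finite G] {K : AddSubgroup G} (hM : IsSidon M)
    (h0 : 0 ∈ M) (hMK : AddSubgroup.closure (M : Set G) = K) (hY : Y.Nonempty)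
    (hYK : (Y : Set G) ⊆ K) (hlt : #(Y + M) < Nat.card K) : #Y + #M ≤ #(Y + M) + 1 := by
  obtain hM3 | hM2 := le_or_gt 3 #M
  · exact hM.card_add_card_le_of_three_le hM3 h0 hMK hY hYK hlt
  · have := card_lt_card_add_of_closure_eq h0 hMK hY hlt
    lia

end Sidon

section ArithmeticProgression

variable {G : Type*} [AddCommGroup G] {A : Finset G} {a d : G}

lemma mem_of_forall_sub_mem [Finite G] (hd : AddSubgroup.zmultiples d = ⊤)
    (hA : A.Nonempty) (h : ∀ b ∈ A, b - d ∈ A) (x : G) : x ∈ A := by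
  classical
  have hstab : AddAction.stabilizer G A = ⊤ := by
    rw [← top_le_iff, ← hd, AddSubgroup.zmultiples_le, ← neg_mem_iff,
      AddAction.mem_stabilizer_finset']
    intro b hb
    simpa only [vadd_eq_add, neg_add_eq_sub] using h b hb
  obtain ⟨b, hb⟩ := hA
  have hx : x - b ∈ AddAction.stabilizer G A := hstab ▸ AddSubgroup.mem_top _
  simpa using AddAction.mem_stabilizer_finset'.1 hx hb

variable [DecidableEq G]

lemma isAPWith_of_card_le_one (hA : #A ≤ 1) (d : G) : IsAPWith d A := by
  obtain rfl | hne := A.eq_empty_or_nonempty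
  · exact ⟨0, 0, by simp⟩
  · obtain ⟨a, rfl⟩ := Finset.card_eq_one.1 (hA.antisymm hne.card_pos)
    exact ⟨a, 1, by simp⟩

lemma isAPWith_of_forall_sub_mem [Finite G] (hd : AddSubgroup.zmultiples d = ⊤) (ha : a ∈ A)
    (had : a - d ∉ A) (h : ∀ b ∈ A, b ≠ a → b - d ∈ A) : IsAPWith d A := by
  have hneg : (addOrderOf d - 1) • d = -d := by
    rw [eq_neg_iff_add_eq_zero, add_sub_one_nsmul (addOrderOf_pos d).ne', addOrderOf_nsmul_eq_zero]
  have hexit : ∃ i : ℕ, a + i • d ∉ A := ⟨addOrderOf d - 1, by rwa [hneg, ← sub_eq_add_neg]⟩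
  set k := Nat.find hexit
  have hk : a + k • d ∉ A := Nat.find_spec hexit
  have hmin {i : ℕ} (hi : i < k) : a + i • d ∈ A := not_not.1 (Nat.find_min hexit hi)
  have hk_pos : 0 < k := (Nat.find_pos hexit).2 (by simpa using ha)
  set P := (Finset.range k).image (fun i ↦ a + i • d) with hP
  have hPA : P ⊆ A := Finset.image_subset_iff.2 fun i hi ↦ hmin (Finset.mem_range.1 hi)
  have haP : a ∈ P := Finset.mem_image.2 ⟨0, Finset.mem_range.2 hk_pos, by simp⟩
  have hAP : A ⊆ P := by
    rw [← Finset.sdiff_eq_empty_iff_subset, ← Finset.not_nonempty_iff_eq_empty]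
    intro hne
    refine (Finset.mem_sdiff.1 (mem_of_forall_sub_mem hd hne (fun b hb ↦ ?_) a)).2 haP
    obtain ⟨hbA, hbP⟩ := Finset.mem_sdiff.1 hb
    refine Finset.mem_sdiff.2 ⟨h b hbA (by rintro rfl; exact hbP haP), fun hbd ↦ ?_⟩
    obtain ⟨i, hi, hib⟩ := Finset.mem_image.1 hbd
    have hb_eq : a + (i + 1) • d = b := by rw [succ_nsmul, ← add_assoc, hib, sub_add_cancel]
    obtain hi' | hi' := (Nat.succ_le_of_lt (Finset.mem_range.1 hi)).lt_or_eq
    · exact hbP (Finset.mem_image.2 ⟨i + 1, Finset.mem_range.2 hi', hb_eq⟩)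
    · exact hk (hi' ▸ hb_eq ▸ hbA)
  have hk_lt : k ≤ addOrderOf d - 1 := Nat.find_min' hexit (by rwa [hneg, ← sub_eq_add_neg])
  refine ⟨a, k, ?_, hAP.antisymm hPA⟩
  rw [hAP.antisymm hPA, hP, Finset.card_image_of_injOn, Finset.card_range]
  intro i hi j hj hij
  rw [Finset.coe_range] at hi hj
  refine nsmul_injOn_Iio_addOrderOf (Set.mem_Iio.2 ?_) (Set.mem_Iio.2 ?_) (add_left_cancel hij) <;>
    grind

lemma isAPWith_of_card_add_pair_le [Finite G] (hd : AddSubgroup.zmultiples d = ⊤)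
    (hA : A.Nonempty) (hle : #(A + {0, d}) ≤ #A + 1) (hlt : #(A + {0, d}) < Nat.card G) :
    IsAPWith d A := by
  have hadd : A + {0, d} = A ∪ (d +ᵥ A) := by
    rw [Finset.insert_eq, Finset.add_union, Finset.singleton_zero, add_zero, add_comm A,
      ← vadd_eq_add, Finset.singleton_vadd]
  have hstart : #(A \ (d +ᵥ A)) ≤ 1 := by
    have := Finset.card_sdiff_add_card A (d +ᵥ A)
    rw [← hadd, Finset.card_vadd_finset] at this
    lia
  have mem_sdiff_iff {b : G} : b ∈ A \ (d +ᵥ A) ↔ b ∈ A ∧ b - d ∉ A := by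
    rw [Finset.mem_sdiff, ← Finset.neg_vadd_mem_iff, vadd_eq_add, neg_add_eq_sub]
  obtain ⟨a, ha, had⟩ : ∃ a ∈ A, a - d ∉ A := by
    by_contra! h
    have := Fintype.ofFinite G
    have huniv : A = Finset.univ := Finset.eq_univ_of_forall (mem_of_forall_sub_mem hd hA h)
    rw [hadd, huniv, Finset.union_eq_left.2 (Finset.subset_univ _), Finset.card_univ,
      Nat.card_eq_fintype_card] at hlt
    exact hlt.false
  refine isAPWith_of_forall_sub_mem hd ha had fun b hb hba ↦ ?_
  by_contra hbd
  exact hba <| Finset.card_le_one.1 hstart b (mem_sdiff_iff.2 ⟨hb, hbd⟩) a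
    (mem_sdiff_iff.2 ⟨ha, had⟩)

end ArithmeticProgression

section HyperAtom

variable {G : Type*} [AddCommGroup G] [DecidableEq G] {K : AddSubgroup G}
  {A F M : Finset G}

lemma IsHyperAtom.kappa_one_add_one (hA : IsHyperAtom A ⊥) (hne : A.Nonempty) :
    kappa 1 A + 1 = #A := by
  obtain ⟨F, hF, hfrag⟩ := hA.1
  have hF0 : F = {0} := Finset.coe_injective <| by simpa using hF
  have := hfrag.card_add_eq hne
  rw [hF0, Finset.singleton_zero, zero_add, Finset.card_zero] at this
  lia

variable [Finite G]

lemma IsHyperAtom.eq_top_of_card_add_lt (hA : IsHyperAtom A ⊥) (hne : A.Nonempty)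
    (hsize : 2 * #A ≤ Nat.card G + 1) (hF : (F : Set G) = K) (hK : K ≠ ⊥)
    (hlt : #(F + A) < #F + #A) : K = ⊤ := by
  have hκ := hA.kappa_one_add_one hne
  have hFcard := card_eq_natCard_of_coe_eq hF
  have hKpos : 0 < Nat.card K := Nat.card_pos
  by_cases hfull : #(F + A) < Nat.card G
  · have hle := card_add_kappa_le (k := 1) hne (X := F) (by lia) (by lia)
    have hcard := hA.2 K F hF ⟨by lia, by lia, by lia⟩
    rw [AddSubgroup.card_bot] at hcard
    exact absurd (AddSubgroup.eq_bot_of_card_le K hcard) hK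
  · by_contra hKtop
    have hindex : 2 ≤ K.index := by
      have := K.index_ne_zero_of_finite
      have := AddSubgroup.index_eq_one.not.2 hKtop
      lia
    have := Nat.mul_le_mul_left (Nat.card K) hindex
    rw [K.card_mul_index] at this
    lia

lemma IsHyperAtom.closure_eq_top_of_isSidon (hA : IsHyperAtom A ⊥) (hne : A.Nonempty)
    (hsize : 2 * #A ≤ Nat.card G + 1) (hM : IsSidon M) (h0 : 0 ∈ M) (hM2 : 2 ≤ #M)
    (hlt : #(M + A) < #M + #A) : AddSubgroup.closure (M : Set G) = ⊤ := by
  have hF := (Set.toFinite (AddSubgroup.closure (M : Set G) : Set G)).coe_toFinset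
  refine hA.eq_top_of_card_add_lt hne hsize hF ?_ ?_
  · rw [Ne, AddSubgroup.closure_eq_bot_iff]
    intro hsub
    have : #M ≤ 1 := Finset.card_le_one_iff_subset_singleton.2 ⟨0, by exact_mod_cast hsub⟩
    lia
  · refine card_add_lt_of_closure_eq hF h0 rfl
      (fun Y hY hYK hYlt ↦ hM.card_add_card_le_of_closure_eq h0 rfl hY hYK hYlt) ?_
    rw [add_comm A M]
    lia

theorem IsHyperAtom.exists_isAPWith_or_isVosper (hA : IsHyperAtom A ⊥)
    (hsize : 2 * #A ≤ Nat.card G + 1) : (∃ d, IsAPWith d A) ∨ IsVosper A := by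
  refine or_iff_not_imp_right.2 fun hV ↦ ?_
  obtain hA1 | hA2 := le_or_gt #A 1
  · exact ⟨0, isAPWith_of_card_le_one hA1 0⟩
  have hne : A.Nonempty := Finset.card_pos.1 (by lia)
  obtain ⟨M, hM, h0, hlt⟩ := exists_isKAtom_two_of_not_isVosper hne hV
  have hM2 : 2 ≤ #M := hM.1.1
  have hMA := hM.1.card_add_add_le
  obtain ⟨K, hK⟩ | hSidon := hM.eq_addSubgroup_or_isSidon hne h0
  · have hKM := card_eq_natCard_of_coe_eq hK
    have hK_bot : K ≠ ⊥ := by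
      rintro rfl
      rw [AddSubgroup.card_bot] at hKM
      lia
    rw [hA.eq_top_of_card_add_lt hne hsize hK hK_bot hlt, AddSubgroup.card_top] at hKM
    have : #M ≤ #(M + A) := Finset.card_le_card_add_right hne
    lia
  have htop := hA.closure_eq_top_of_isSidon hne hsize hSidon h0 hM2 hlt
  obtain hM3 | hM3 := le_or_gt 3 #M
  · have := hSidon.isVosper hM3 h0 htop A hA2
    rw [add_comm A M] at this
    lia
  · obtain ⟨d, rfl⟩ : ∃ d, M = {0, d} := by
      obtain ⟨d, hd⟩ := Finset.card_eq_one.1 (Finset.card_erase_of_mem h0 |>.trans (by lia))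
      exact ⟨d, by rw [← hd, Finset.insert_erase h0]⟩
    refine ⟨d, isAPWith_of_card_add_pair_le ?_ hne ?_ ?_⟩
    · simpa [← AddSubgroup.zmultiples_eq_closure] using htop
    · rw [add_comm]; lia
    · rw [add_comm]; lia

end HyperAtom

section Quotient

variable {G : Type*} [AddCommGroup G] [Finite G] {H K : AddSubgroup G} {S : Finset G}
  {X : Finset (G ⧸ H)}

/-- The preimage in `G` of a finite subset of `G ⧸ H`, a finite union of cosets of `H`. -/
noncomputable def quotientPreimage (H : AddSubgroup G) (X : Finset (G ⧸ H)) : Finset G :=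
  (Set.toFinite (QuotientAddGroup.mk' H ⁻¹' X)).toFinset

lemma mem_quotientPreimage {g : G} :
    g ∈ quotientPreimage H X ↔ QuotientAddGroup.mk' H g ∈ X := by
  simp [quotientPreimage]

lemma card_quotientPreimage (H : AddSubgroup G) (X : Finset (G ⧸ H)) :
    #(quotientPreimage H X) = #X * Nat.card H := by
  rw [← Nat.card_eq_finsetCard, ← Nat.card_eq_finsetCard X, mul_comm, ← Nat.card_prod]
  refine Nat.card_congr (.trans ?_ (QuotientAddGroup.preimageMkEquivAddSubgroupProdSet H X))
  exact Equiv.subtypeEquivRight fun g ↦ mem_quotientPreimage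

variable [DecidableEq G]

lemma IsHyperAtom.isFragment_quotientPreimage_zero (hH : IsHyperAtom S H) :
    IsFragment 1 S (quotientPreimage H 0) := by
  obtain ⟨F, hF, hfrag⟩ := hH.1
  convert hfrag
  ext g
  rw [mem_quotientPreimage, Finset.mem_zero, ← Finset.mem_coe, hF]
  exact QuotientAddGroup.eq_zero_iff g

variable [DecidableEq (G ⧸ H)]

lemma quotientPreimage_add (X : Finset (G ⧸ H)) (S : Finset G) :
    quotientPreimage H X + S = quotientPreimage H (X + S.image (QuotientAddGroup.mk' H)) := by
  ext g
  rw [mem_quotientPreimage, Finset.mem_add, Finset.mem_add]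
  constructor
  · rintro ⟨x, hx, s, hs, rfl⟩
    exact ⟨_, mem_quotientPreimage.1 hx, _, Finset.mem_image_of_mem _ hs, (map_add _ x s).symm⟩
  · rintro ⟨x, hx, _, hmem, hxs⟩
    obtain ⟨s, hs, rfl⟩ := Finset.mem_image.1 hmem
    refine ⟨g - s, mem_quotientPreimage.2 ?_, s, hs, sub_add_cancel g s⟩
    rwa [map_sub, ← hxs, add_sub_cancel_right]

lemma card_quotientPreimage_add (X : Finset (G ⧸ H)) (S : Finset G) :
    #(quotientPreimage H X + S) = #(X + S.image (QuotientAddGroup.mk' H)) * Nat.card H := by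
  rw [quotientPreimage_add, card_quotientPreimage]

lemma IsHyperAtom.card_image_mul_natCard (hH : IsHyperAtom S H) (hS : S.Nonempty) :
    #(S.image (QuotientAddGroup.mk' H)) * Nat.card H = Nat.card H + kappa 1 S := by
  have hadd := hH.isFragment_quotientPreimage_zero.card_add_eq hS
  rwa [card_quotientPreimage_add, card_quotientPreimage, zero_add, Finset.card_zero,
    one_mul] at hadd

lemma IsHyperAtom.card_image_lt (hH : IsHyperAtom S H) :
    #(S.image (QuotientAddGroup.mk' H)) < Nat.card (G ⧸ H) := by
  have hle := hH.isFragment_quotientPreimage_zero.card_add_add_le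
  rw [card_quotientPreimage_add, zero_add, H.card_eq_card_quotient_mul_card_addSubgroup] at hle
  exact lt_of_mul_lt_mul_right (Nat.lt_of_succ_le hle) (Nat.zero_le _)

lemma card_quotientPreimage_add_le_iff (X : Finset (G ⧸ H)) (S : Finset G) :
    #(quotientPreimage H X + S) ≤ Nat.card G - 1 ↔
      #(X + S.image (QuotientAddGroup.mk' H)) ≤ Nat.card (G ⧸ H) - 1 := by
  have hG : 0 < Nat.card G := Nat.card_pos
  have hQ : 0 < Nat.card (G ⧸ H) := Nat.card_pos
  rw [Nat.le_sub_one_iff_lt hG, Nat.le_sub_one_iff_lt hQ, card_quotientPreimage_add,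
    H.card_eq_card_quotient_mul_card_addSubgroup, Nat.mul_lt_mul_right Nat.card_pos]

lemma IsHyperAtom.card_add_card_image_le (hH : IsHyperAtom S H) (hS : S.Nonempty) (hX : 1 ≤ #X)
    (hXS : #(X + S.image (QuotientAddGroup.mk' H)) ≤ Nat.card (G ⧸ H) - 1) :
    #X + #(S.image (QuotientAddGroup.mk' H)) ≤ #(X + S.image (QuotientAddGroup.mk' H)) + 1 := by
  have hpos : 1 ≤ #(quotientPreimage H X) := by
    rw [card_quotientPreimage]
    exact Nat.mul_pos hX Nat.card_pos
  have hκ := card_add_kappa_le hS hpos ((card_quotientPreimage_add_le_iff X S).2 hXS)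
  have hcard := hH.card_image_mul_natCard hS
  rw [card_quotientPreimage_add, card_quotientPreimage] at hκ
  refine le_of_mul_le_mul_right (a := Nat.card H) ?_ Nat.card_pos
  rw [add_mul, add_mul]
  lia

lemma IsHyperAtom.kappa_one_image_add_one (hH : IsHyperAtom S H) (hS : S.Nonempty) :
    kappa 1 (S.image (QuotientAddGroup.mk' H)) + 1 = #(S.image (QuotientAddGroup.mk' H)) := by
  have hne : (S.image (QuotientAddGroup.mk' H)).Nonempty := hS.image _
  have hzero : #((0 : Finset (G ⧸ H)) + S.image (QuotientAddGroup.mk' H)) ≤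
      Nat.card (G ⧸ H) - 1 := by
    have := hH.card_image_lt
    rw [zero_add]
    lia
  obtain ⟨X, hX⟩ := KSeparable.exists_isFragment ⟨0, (Finset.card_zero).ge, hzero⟩
  have hle := hH.card_add_card_image_le hS hX.1 hX.2.1
  have heq := hX.card_add_eq hne
  have hge := card_add_kappa_le hne Finset.card_zero.ge hzero
  rw [zero_add, Finset.card_zero] at hge
  lia

theorem IsHyperAtom.image_mk (hH : IsHyperAtom S H) (hS : S.Nonempty) :
    IsHyperAtom (S.image (QuotientAddGroup.mk' H)) ⊥ := by
  have hκ := hH.kappa_one_image_add_one hS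
  have hlt := hH.card_image_lt
  have hcard := hH.card_image_mul_natCard hS
  refine ⟨⟨0, ?_, Finset.card_zero.ge, ?_, ?_⟩, fun K F hF hfrag ↦ ?_⟩
  · rw [Finset.coe_zero, ← Set.singleton_zero, AddSubgroup.coe_bot]
  · rw [zero_add]; lia
  · rw [zero_add, Finset.card_zero]; lia
  have hcoe : (quotientPreimage H F : Set G) = K.comap (QuotientAddGroup.mk' H) := by
    ext g
    rw [Finset.mem_coe, mem_quotientPreimage, ← Finset.mem_coe, hF]
    rfl
  have hpre : IsFragment 1 S (quotientPreimage H F) := by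
    refine ⟨?_, (card_quotientPreimage_add_le_iff F S).2 hfrag.2.1, ?_⟩
    · rw [card_quotientPreimage]
      exact Nat.mul_pos hfrag.1 Nat.card_pos
    · rw [card_quotientPreimage_add, card_quotientPreimage, ← Nat.sub_mul, hfrag.2.2]
      rw [← hκ, add_one_mul] at hcard
      lia
  have hle := hH.2 _ _ hcoe hpre
  rw [← card_eq_natCard_of_coe_eq hcoe, card_quotientPreimage] at hle
  rw [← card_eq_natCard_of_coe_eq hF, AddSubgroup.card_bot]
  exact le_of_mul_le_mul_right (hle.trans_eq (one_mul _).symm) Nat.card_pos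

lemma IsHyperAtom.two_mul_card_image_le (hH : IsHyperAtom S H) (hS : S.Nonempty)
    (hsize : 2 * #S ≤ Nat.card G + 1) :
    2 * #(S.image (QuotientAddGroup.mk' H)) ≤ Nat.card (G ⧸ H) + 1 := by
  have hcard := hH.card_image_mul_natCard hS
  have hG := H.card_eq_card_quotient_mul_card_addSubgroup
  have hfrag := hH.isFragment_quotientPreimage_zero
  have hSle : #S ≤ #(quotientPreimage H 0 + S) :=
    Finset.card_le_card_add_left (Finset.card_pos.1 hfrag.1)
  have hκ := kappa_le (S := S) (k := 1) Finset.card_zero.ge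
    (by rw [zero_add]; exact hSle.trans hfrag.2.1)
  rw [zero_add, Finset.card_zero] at hκ
  refine Nat.lt_add_one_iff.1 (lt_of_mul_lt_mul_right (a := Nat.card H) ?_ (Nat.zero_le _))
  have : 0 < Nat.card H := Nat.card_pos
  have := hS.card_pos
  rw [mul_assoc, hcard, add_one_mul, add_one_mul, ← hG]
  lia

end Quotient

theorem stmt14_general {G : Type*} [AddCommGroup G] [Finite G] [DecidableEq G] (S : Finset G)
    (hsize : 2 * #S ≤ Nat.card G + 1) (H : AddSubgroup G) (hH : IsHyperAtom S H) :
    (∃ d : G ⧸ H, IsAPWith d (S.image (QuotientAddGroup.mk' H))) ∨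
      IsVosper (S.image (QuotientAddGroup.mk' H)) := by
  obtain rfl | hS := S.eq_empty_or_nonempty
  · exact Or.inl ⟨0, isAPWith_of_card_le_one (by simp) 0⟩
  · exact (hH.image_mk hS).exists_isAPWith_or_isVosper (hH.two_mul_card_image_le hS hsize)

theorem stmt14 {G : Type*} [AddCommGroup G] [Fintype G] [DecidableEq G] (S : Finset G)
    (hgen : AddSubgroup.closure (S : Set G) = ⊤) (h0S : (0 : G) ∈ S)
    (hsize : 2 * S.card ≤ Nat.card G + 1)
    (hk : kappa 2 S + 1 ≤ S.card)
    (H : AddSubgroup G) (hH : IsHyperAtom S H) :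
    (∃ d : G ⧸ H, IsAPWith d (S.image (QuotientAddGroup.mk' H))) ∨
      IsVosper (S.image (QuotientAddGroup.mk' H)) :=
  stmt14_general S hsize H hH
end
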